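/- For a positive integer r, the density ρ(x) = (1/(πx)) · x^{1/(r+1)} sin(π/(r+1)) / (1 + 2x^{1/(r+1)} cos(π/(r+1)) + x^{2/(r+1)}) satisfies ∫_0^∞ λ ρ(λ)/(λ + z) dλ = 1/(1 + z^{1/(r+1)}) for all real z > 0. -/

import Mathlib

open Filter Topology MeasureTheory Complex

/-- If `f` tends to `L` as the real part tends along `l`, then so do its integrals over vertical
segments, up to the length of the segment. -/
theorem tendsto_integral_vertical {l : Filter ℝ} [l.IsCountablyGenerated] {f : ℂ → ℂ} {L : ℂ}
    {c d : ℝ} (hf : Tendsto f (comap re l) (𝓝 L))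
    (hc : ∀ x : ℝ, ContinuousOn (fun y : ℝ ↦ f (x + y * I)) (Set.uIcc c d)) :
    Tendsto (fun x : ℝ ↦ ∫ y in c..d, f (x + y * I)) l (𝓝 ((d - c : ℝ) * L)) := by
  have hbound : ∀ᶠ u in comap re l, ‖f u‖ ≤ ‖L‖ + 1 :=
    (hf.norm.eventually_lt_const (lt_add_one _)).mono fun _ h ↦ h.le
  rw [eventually_comap] at hbound
  have key := intervalIntegral.tendsto_integral_filter_of_dominated_convergence
    (μ := volume) (a := c) (b := d) (l := l) (F := fun (x : ℝ) (y : ℝ) ↦ f (x + y * I))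
    (f := fun _ ↦ L) (fun _ ↦ ‖L‖ + 1) ?_ ?_ ?_ ?_
  · simpa using key
  · exact .of_forall fun x ↦ ((hc x).mono Set.uIoc_subset_uIcc).aestronglyMeasurable
      measurableSet_uIoc
  · filter_upwards [hbound] with x hx
    exact .of_forall fun y _ ↦ hx _ (by simp)
  · exact intervalIntegrable_const
  · refine .of_forall fun y _ ↦ hf.comp (tendsto_comap_iff.2 (tendsto_id.congr fun x ↦ ?_))
    simp

theorem one_add_exp_ne_zero {w : ℂ} (hw : |w.im| < Real.pi) : 1 + exp w ≠ 0 := by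
  intro h
  have h1 : exp w = exp (Real.pi * I) := by rw [exp_pi_mul_I]; linear_combination h
  obtain ⟨n, hn⟩ := exp_eq_exp_iff_exists_int.1 h1
  have him : w.im = Real.pi * (1 + 2 * n) := by
    rw [hn]; simp; ring
  rw [him, abs_mul, abs_of_pos Real.pi_pos] at hw
  have h2 : |(1 + 2 * n : ℝ)| < 1 := by
    by_contra! h3
    nlinarith [Real.pi_pos]
  have h4 : |1 + 2 * n| < 1 := by exact_mod_cast h2
  rw [abs_lt] at h4
  omega

theorem eq_ofReal_of_exp_eq {u : ℂ} {b : ℝ} (hu : |u.im| < 2 * Real.pi)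
    (h : exp u = exp b) : u = b := by
  obtain ⟨n, hn⟩ := exp_eq_exp_iff_exists_int.1 h
  have him : u.im = 2 * Real.pi * n := by
    rw [hn]; simp; ring
  rw [him, abs_mul, abs_of_pos Real.two_pi_pos] at hu
  have h2 : |(n : ℝ)| < 1 := by
    by_contra! h3
    nlinarith [Real.pi_pos]
  have h4 : n = 0 := Int.abs_lt_one_iff.1 (by exact_mod_cast h2)
  simpa [h4] using hn

theorem dslope_exp_ne_zero {u : ℂ} {b : ℝ} (hu : |u.im| < 2 * Real.pi) :
    dslope exp (b : ℂ) u ≠ 0 := by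
  by_cases h : u = b
  · rw [h, dslope_same]
    simp
  · rw [dslope_of_ne _ h, slope_def_field]
    exact div_ne_zero (sub_ne_zero.2 fun h' ↦ h (eq_ofReal_of_exp_eq hu h')) (sub_ne_zero.2 h)

/-- The function `1 / (1 + w ^ a)` in the logarithmic coordinate `w = e^u`. -/
noncomputable def inverseOneAddExp (a : ℝ) (u : ℂ) : ℂ := 1 / (1 + exp (a * u))

/-- The kernel `e^u (F u - F b) / (e^u - e^b)` with `F = inverseOneAddExp a` and with the
singularity at `b` removed. -/
noncomputable def stieltjesKernel (a b : ℝ) (u : ℂ) : ℂ :=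
  exp u * (dslope (inverseOneAddExp a) b u / dslope exp (b : ℂ) u)

theorem stieltjesKernel_of_ne (a b : ℝ) {u : ℂ} (hu : u ≠ b) :
    stieltjesKernel a b u =
      exp u * ((inverseOneAddExp a u - inverseOneAddExp a b) / (exp u - exp b)) := by
  rw [stieltjesKernel, dslope_of_ne _ hu, dslope_of_ne _ hu, slope_def_field, slope_def_field,
    div_div_div_cancel_right₀ (sub_ne_zero.2 hu)]

theorem differentiableOn_stieltjesKernel {a : ℝ} (b : ℝ) (ha : 0 < a) :
    DifferentiableOn ℂ (stieltjesKernel a b)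
      {u | |u.im| < Real.pi / a ∧ |u.im| < 2 * Real.pi} := by
  set S : Set ℂ := {u | |u.im| < Real.pi / a ∧ |u.im| < 2 * Real.pi}
  have hS : S ∈ 𝓝 (b : ℂ) := by
    refine IsOpen.mem_nhds ?_ ?_
    · have him : Continuous fun u : ℂ ↦ |u.im| := by fun_prop
      exact (isOpen_lt him continuous_const).inter (isOpen_lt him continuous_const)
    · simp only [S, Set.mem_ofPred_eq, ofReal_im, abs_zero]
      exact ⟨by positivity, by positivity⟩
  refine differentiable_exp.differentiableOn.mul (.div ?_ ?_ fun u hu ↦ dslope_exp_ne_zero hu.2)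
  · rw [differentiableOn_dslope hS]
    refine .div (by fun_prop) (by fun_prop) fun u hu ↦ one_add_exp_ne_zero ?_
    rw [im_ofReal_mul, abs_mul, abs_of_pos ha, mul_comm]
    exact (lt_div_iff₀ ha).1 hu.1
  · rw [differentiableOn_dslope hS]
    exact differentiable_exp.differentiableOn

theorem tendsto_re_mul_comap {l l' : Filter ℝ} {k : ℝ} (h : Tendsto (k * ·) l l') :
    Tendsto (fun u : ℂ ↦ (k : ℂ) * u) (comap re l) (comap re l') := by
  rw [tendsto_comap_iff]
  simpa [Function.comp_def] using h.comp (tendsto_comap (f := re) (x := l))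

theorem tendsto_stieltjesKernel_atBot {a : ℝ} (b : ℝ) (ha : 0 < a) :
    Tendsto (stieltjesKernel a b) (comap re atBot) (𝓝 0) := by
  have h1 : Tendsto exp (comap re atBot) (𝓝 0) := tendsto_exp_comap_re_atBot
  have h2 : Tendsto (fun u : ℂ ↦ exp (a * u)) (comap re atBot) (𝓝 0) :=
    h1.comp (tendsto_re_mul_comap (tendsto_id.const_mul_atBot ha))
  have h3 : Tendsto (fun u ↦ exp u * ((inverseOneAddExp a u - inverseOneAddExp a b) /
      (exp u - exp b))) (comap re atBot) (𝓝 (0 * ((1 / (1 + 0) - inverseOneAddExp a b) /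
      (0 - exp b)))) :=
    h1.mul ((((tendsto_const_nhds.div (tendsto_const_nhds.add h2) (by simp))).sub
      tendsto_const_nhds).div (h1.sub tendsto_const_nhds) (by simp))
  rw [zero_mul] at h3
  refine h3.congr' ?_
  filter_upwards [tendsto_comap.eventually (eventually_lt_atBot b)] with u hu
  rw [stieltjesKernel_of_ne]
  rintro rfl
  simp at hu

theorem tendsto_stieltjesKernel_atTop {a : ℝ} (b : ℝ) (ha : 0 < a) :
    Tendsto (stieltjesKernel a b) (comap re atTop) (𝓝 (-inverseOneAddExp a b)) := by
  have h0 : Tendsto exp (comap re atBot) (𝓝 0) := tendsto_exp_comap_re_atBot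
  have h1 : Tendsto (fun u : ℂ ↦ exp (-u)) (comap re atTop) (𝓝 0) := by
    simpa [Function.comp_def] using h0.comp (tendsto_re_mul_comap (k := -1)
      (by simpa using tendsto_neg_atTop_atBot))
  have h2 : Tendsto (fun u : ℂ ↦ exp (-(a * u))) (comap re atTop) (𝓝 0) :=
    h1.comp (tendsto_re_mul_comap (tendsto_id.const_mul_atTop ha))
  have h3 : Tendsto (fun u : ℂ ↦ (exp (-(a * u)) / (exp (-(a * u)) + 1) - inverseOneAddExp a b) /
      (1 - exp b * exp (-u))) (comap re atTop) (𝓝 ((0 / (0 + 1) - inverseOneAddExp a b) /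
      (1 - exp b * 0))) :=
    ((h2.div (h2.add tendsto_const_nhds) (by simp)).sub tendsto_const_nhds).div
      (tendsto_const_nhds.sub (tendsto_const_nhds.mul h1)) (by simp)
  simp only [zero_div, zero_sub, mul_zero, sub_zero, div_one] at h3
  refine h3.congr' ?_
  filter_upwards [tendsto_comap.eventually (eventually_gt_atTop b)] with u hu
  rw [stieltjesKernel_of_ne]
  · rw [show inverseOneAddExp a u = exp (-(a * u)) / (exp (-(a * u)) + 1) by
      rw [inverseOneAddExp, exp_neg]
      field_simp [exp_ne_zero]]
    rw [show 1 - exp b * exp (-u) = (exp u - exp b) / exp u by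
      rw [exp_neg]
      field_simp [exp_ne_zero]]
    rw [div_div_eq_mul_div, mul_div_assoc', mul_comm]
  · rintro rfl
    simp at hu

theorem inverseOneAddExp_sub (a x : ℝ) (h : |a * Real.pi| < Real.pi) :
    inverseOneAddExp a (x - Real.pi * I) - inverseOneAddExp a (x + Real.pi * I) =
      2 * I * (Real.exp (a * x) * Real.sin (Real.pi * a) / (1 + 2 * Real.exp (a * x) *
        Real.cos (Real.pi * a) + Real.exp (a * x) ^ 2) : ℝ) := by
  have h1 : (1 : ℂ) + exp (a * (x - Real.pi * I)) ≠ 0 := one_add_exp_ne_zero (by simpa using h)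
  have h2 : (1 : ℂ) + exp (a * (x + Real.pi * I)) ≠ 0 := one_add_exp_ne_zero (by simpa using h)
  have e1 : exp (a * (x - Real.pi * I)) = Real.exp (a * x) *
      (Real.cos (Real.pi * a) - Real.sin (Real.pi * a) * I) := by
    rw [show (a : ℂ) * (x - Real.pi * I) = (a * x : ℝ) + (-(Real.pi * a : ℝ)) * I by
      push_cast; ring, exp_add, exp_mul_I, cos_neg, sin_neg]
    push_cast; ring
  have e2 : exp (a * (x + Real.pi * I)) = Real.exp (a * x) *
      (Real.cos (Real.pi * a) + Real.sin (Real.pi * a) * I) := by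
    rw [show (a : ℂ) * (x + Real.pi * I) = (a * x : ℝ) + ((Real.pi * a : ℝ)) * I by
      push_cast; ring, exp_add, exp_mul_I]
    push_cast; ring
  have hs : ((Real.sin (Real.pi * a) : ℝ) : ℂ) ^ 2 + (Real.cos (Real.pi * a) : ℝ) ^ 2 = 1 := by
    exact_mod_cast Real.sin_sq_add_cos_sq _
  rw [inverseOneAddExp, inverseOneAddExp]
  rw [e1] at h1 ⊢
  rw [e2] at h2 ⊢
  rw [div_sub_div _ _ h1 h2]
  rw [ofReal_div, ← mul_div_assoc]
  congr 1
  · push_cast; ring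
  · push_cast at hs ⊢
    linear_combination (exp (a * x)) ^ 2 * hs -
      (exp (a * x)) ^ 2 * Complex.sin (Real.pi * a) ^ 2 * I_sq

/-- The jump of `stieltjesKernel a b` across the strip `|im u| ≤ π`, divided by `2 * I`. -/
noncomputable def stieltjesJump (a b x : ℝ) : ℝ :=
  Real.exp x / (Real.exp x + Real.exp b) *
    (Real.exp (a * x) * Real.sin (Real.pi * a) /
      (1 + 2 * Real.exp (a * x) * Real.cos (Real.pi * a) + Real.exp (a * x) ^ 2))

theorem stieltjesKernel_sub {a : ℝ} (b x : ℝ) (h : |a * Real.pi| < Real.pi) :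
    stieltjesKernel a b (x + (-Real.pi : ℝ) * I) - stieltjesKernel a b (x + Real.pi * I) =
      2 * I * stieltjesJump a b x := by
  have hne : ∀ {p : ℝ}, p ≠ 0 → (x : ℂ) + p * I ≠ b := fun hp h ↦ hp <| by
    simpa using congrArg im h
  rw [stieltjesKernel_of_ne _ _ (hne (neg_ne_zero.2 Real.pi_ne_zero)),
    stieltjesKernel_of_ne _ _ (hne Real.pi_ne_zero), ofReal_neg, neg_mul, ← sub_eq_add_neg,
    exp_sub, exp_add, exp_pi_mul_I, div_neg, div_one, mul_neg_one, ← mul_sub, ← sub_div,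
    sub_sub_sub_cancel_right, inverseOneAddExp_sub a x h, ← neg_add', div_neg, neg_mul_neg,
    stieltjesJump]
  push_cast
  ring

theorem sin_pi_mul_pos {a : ℝ} (ha : 0 < a) (ha1 : a < 1) : 0 < Real.sin (Real.pi * a) :=
  Real.sin_pos_of_pos_of_lt_pi (by positivity) (by nlinarith [Real.pi_pos])

theorem one_add_two_mul_cos_add_sq_pos {a : ℝ} (ha : 0 < a) (ha1 : a < 1) (t : ℝ) :
    0 < 1 + 2 * t * Real.cos (Real.pi * a) + t ^ 2 := by
  have hs := sin_pi_mul_pos ha ha1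
  nlinarith [sq_nonneg (t + Real.cos (Real.pi * a)), Real.sin_sq_add_cos_sq (Real.pi * a),
    mul_pos hs hs]

theorem continuous_stieltjesJump {a : ℝ} (ha : 0 < a) (ha1 : a < 1) (b : ℝ) :
    Continuous (stieltjesJump a b) :=
  .mul (.div (by fun_prop) (by fun_prop) fun x ↦ by positivity)
    (.div (by fun_prop) (by fun_prop) fun x ↦ (one_add_two_mul_cos_add_sq_pos ha ha1 _).ne')

theorem stieltjesJump_nonneg {a : ℝ} (ha : 0 < a) (ha1 : a < 1) (b x : ℝ) :
    0 ≤ stieltjesJump a b x :=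
  mul_nonneg (by positivity) <| div_nonneg
    (mul_nonneg (Real.exp_pos _).le (sin_pi_mul_pos ha ha1).le)
    (one_add_two_mul_cos_add_sq_pos ha ha1 _).le

theorem tendsto_integral_stieltjesJump {a : ℝ} (ha : 0 < a) (ha1 : a < 1) (b : ℝ) :
    Tendsto (fun R : ℝ ↦ ∫ x in -R..R, stieltjesJump a b x) atTop
      (𝓝 (Real.pi / (1 + Real.exp (a * b)))) := by
  have hpi := Real.pi_pos
  have hapi : |a * Real.pi| < Real.pi := by
    rw [abs_of_pos (by positivity)]
    nlinarith
  have hdiff : ∀ {u : ℂ}, u.im ∈ Set.uIcc (-Real.pi) Real.pi →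
      u ∈ {u : ℂ | |u.im| < Real.pi / a ∧ |u.im| < 2 * Real.pi} := by
    intro u hu
    rw [Set.uIcc_of_le (by linarith), Set.mem_Icc, ← abs_le] at hu
    exact ⟨hu.trans_lt ((lt_div_iff₀ ha).2 (by nlinarith)), by linarith⟩
  have hH := differentiableOn_stieltjesKernel b ha
  have hvert : ∀ x : ℝ, ContinuousOn (fun y : ℝ ↦ stieltjesKernel a b (x + y * I))
      (Set.uIcc (-Real.pi) Real.pi) := fun x ↦
    hH.continuousOn.comp (by fun_prop) fun y hy ↦ hdiff (by simpa using hy)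
  have hhor : ∀ {p : ℝ}, p ∈ Set.uIcc (-Real.pi) Real.pi →
      Continuous fun x : ℝ ↦ stieltjesKernel a b (x + p * I) := fun hp ↦
    hH.continuousOn.comp_continuous (by fun_prop) fun x ↦ hdiff (by simpa using hp)
  have hrect : ∀ R : ℝ, ((∫ x in -R..R, stieltjesJump a b x : ℝ) : ℂ) =
      ((∫ y in -Real.pi..Real.pi, stieltjesKernel a b ((-R : ℝ) + y * I)) -
        ∫ y in -Real.pi..Real.pi, stieltjesKernel a b (R + y * I)) / 2 := by
    intro R
    have h := integral_boundary_rect_eq_zero_of_differentiableOn (stieltjesKernel a b)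
      ⟨-R, -Real.pi⟩ ⟨R, Real.pi⟩ (hH.mono fun u hu ↦ hdiff hu.2)
    rw [← intervalIntegral.integral_sub ((hhor Set.left_mem_uIcc).intervalIntegrable _ _)
      ((hhor Set.right_mem_uIcc).intervalIntegrable _ _)] at h
    simp only [stieltjesKernel_sub b _ hapi, intervalIntegral.integral_const_mul,
      intervalIntegral.integral_ofReal, smul_eq_mul] at h
    refine mul_left_cancel₀ (mul_ne_zero two_ne_zero I_ne_zero) ?_
    linear_combination h
  have hlim := ((tendsto_integral_vertical (tendsto_stieltjesKernel_atBot b ha) hvert).comp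
    tendsto_neg_atTop_atBot).sub
    (tendsto_integral_vertical (tendsto_stieltjesKernel_atTop b ha) hvert) |>.div_const 2
  have hre := (continuous_re.tendsto _).comp (hlim.congr fun R ↦ (hrect R).symm)
  convert hre using 2
  · simp
  rw [← ofReal_re (Real.pi / _), inverseOneAddExp]
  congr 1
  push_cast
  ring

theorem integral_stieltjesJump {a : ℝ} (ha : 0 < a) (ha1 : a < 1) (b : ℝ) :
    ∫ x, stieltjesJump a b x = Real.pi / (1 + Real.exp (a * b)) := by
  have hlim := tendsto_integral_stieltjesJump ha ha1 b
  have hint : Integrable (stieltjesJump a b) := by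
    refine integrable_of_intervalIntegral_norm_tendsto _ (fun R ↦
      ((continuous_stieltjesJump ha ha1 b).integrableOn_Ioc)) tendsto_neg_atTop_atBot tendsto_id
      (hlim.congr fun R ↦ ?_)
    simp only [Real.norm_of_nonneg (stieltjesJump_nonneg ha ha1 b _), id]
  exact tendsto_nhds_unique
    (intervalIntegral_tendsto_integral hint tendsto_neg_atTop_atBot tendsto_id) hlim

/-- The Stieltjes representation of `1 / (1 + z ^ a)` for `0 < a < 1`. -/
theorem integral_rpow_mul_sin_div {a : ℝ} (ha : 0 < a) (ha1 : a < 1) {z : ℝ} (hz : 0 < z) :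
    ∫ l in Set.Ioi (0 : ℝ), l ^ a * Real.sin (Real.pi * a) /
      (1 + 2 * l ^ a * Real.cos (Real.pi * a) + (l ^ a) ^ 2) / (l + z) =
      Real.pi / (1 + z ^ a) := by
  have himage : Set.Ioi (0 : ℝ) = Real.exp '' Set.univ := by
    rw [Set.image_univ, Real.range_exp]
  rw [himage, integral_image_eq_integral_abs_deriv_smul .univ
    (fun x _ ↦ (Real.hasDerivAt_exp x).hasDerivWithinAt) Real.exp_injective.injOn,
    setIntegral_univ, Real.rpow_def_of_pos hz, mul_comm (Real.log z),
    ← integral_stieltjesJump ha ha1]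
  congr 1 with x
  rw [stieltjesJump, Real.exp_log hz, abs_of_pos (Real.exp_pos x), ← Real.exp_mul, mul_comm x,
    smul_eq_mul]
  ring


/-- The `r = s` global density satisfies the Stieltjes-transform identity
`∫_0^∞ λ ρ(λ)/(λ + z) dλ = 1/(1 + z^{1/(r+1)})` for all real `z > 0`. -/
theorem global_density_stieltjes (r : ℕ) (hr : 1 ≤ r) (z : ℝ) (hz : 0 < z) :
    ∫ l in Set.Ioi (0 : ℝ),
        l * ((1 / (Real.pi * l)) *
            (l ^ ((1 : ℝ) / ((r : ℝ) + 1)) * Real.sin (Real.pi / ((r : ℝ) + 1))) /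
          (1 + 2 * l ^ ((1 : ℝ) / ((r : ℝ) + 1)) * Real.cos (Real.pi / ((r : ℝ) + 1)) +
            l ^ ((2 : ℝ) / ((r : ℝ) + 1)))) / (l + z) =
      1 / (1 + z ^ ((1 : ℝ) / ((r : ℝ) + 1))) := by
  have hr0 : (0 : ℝ) < r := by exact_mod_cast hr
  have ha : (0 : ℝ) < 1 / ((r : ℝ) + 1) := by positivity
  have ha1 : (1 : ℝ) / ((r : ℝ) + 1) < 1 := by
    rw [div_lt_one (by positivity)]
    linarith
  rw [← mul_div_cancel_left₀ (1 / (1 + z ^ ((1 : ℝ) / ((r : ℝ) + 1)))) Real.pi_ne_zero,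
    mul_one_div, ← integral_rpow_mul_sin_div ha ha1 hz, ← integral_div]
  refine setIntegral_congr_fun measurableSet_Ioi fun l (hl : 0 < l) ↦ ?_
  have hsq : l ^ ((2 : ℝ) / ((r : ℝ) + 1)) = (l ^ ((1 : ℝ) / ((r : ℝ) + 1))) ^ 2 := by
    rw [← Real.rpow_mul_natCast hl.le]
    congr 1
    push_cast
    ring
  simp only [hsq, mul_one_div]
  field_simp
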